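/- Let p ≥ 2 and let G = K_{n_1, …, n_p} be the complete multipartite graph with parts of sizes n_1, …, n_p ≥ 1, and let n = Σ_{i=1}^p n_i. Then for every m with 2 ≤ m ≤ n, the m-Steiner Wiener index of G equals SW_m(G) = (m − 1)·C(n, m) + Σ_{i=1}^p C(n_i, m). -/

import Mathlib

open SimpleGraph

/-- The *Steiner distance* of a set `S` of vertices of `G`: the minimum number of edges
of a connected subgraph of `G` containing all vertices of `S`. -/
noncomputable def steinerDist {V : Type*} (G : SimpleGraph V) (S : Set V) : ℕ :=
  sInf {n | ∃ T : G.Subgraph, T.Connected ∧ S ⊆ T.verts ∧ T.edgeSet.ncard = n}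

/-- The *m-Steiner Wiener index* of `G`: the sum of the Steiner distances of all
`m`-element subsets of the vertex set of `G`. -/
noncomputable def steinerWiener {V : Type*} [Fintype V] (m : ℕ) (G : SimpleGraph V) : ℕ :=
  ∑ S ∈ Finset.powersetCard m (Finset.univ : Finset V), steinerDist G (S : Set V)

/-! Spanning trees turn `steinerDist G S + 1` into the minimum size of a vertex set that contains
`S` and induces a connected subgraph. An `m`-set `S` therefore has Steiner distance `m - 1` if it
induces a connected subgraph, and `m` if it does not but one more vertex makes it connected. A
complete multipartite graph is connected as soon as it has an edge, so for `m ≥ 2` the second case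
occurs there exactly for the independent `m`-sets, which are the `m`-subsets of the parts. -/

section SteinerDist

variable {V : Type*} {G : SimpleGraph V} {S W : Set V}

lemma ncard_verts_le_ncard_edgeSet_add_one {T : G.Subgraph} (hT : T.Connected) :
    T.verts.ncard ≤ T.edgeSet.ncard + 1 := by
  rw [← T.image_coe_edgeSet_coe,
    Set.ncard_image_of_injective _ (Sym2.map.injective Subtype.val_injective)]
  exact hT.coe.card_vert_le_card_edgeSet_add_one

lemma exists_connected_subgraph_ncard_edgeSet_add_one_eq [Finite W]
    (hW : (G.induce W).Connected) :
    ∃ T : G.Subgraph, T.Connected ∧ T.verts = W ∧ T.edgeSet.ncard + 1 = W.ncard := by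
  obtain ⟨F, hF_le, hF⟩ := (connected_induce_iff.1 hW).coe.exists_isTree_le
  refine ⟨Subgraph.coeSubgraph (toSubgraph F hF_le),
    (hF.connected.toSubgraph hF_le).coeSubgraph, by simp, ?_⟩
  have hF_edges : (toSubgraph F hF_le).edgeSet = F.edgeSet := rfl
  rw [Subgraph.edgeSet_map, hF_edges,
    Set.ncard_image_of_injective _ (Sym2.map.injective Subgraph.hom_injective)]
  exact ((isTree_iff_connected_and_card (V := W)).1 hF).2

lemma steinerDist_add_one_le_ncard [Finite W] (hSW : S ⊆ W) (hW : (G.induce W).Connected) :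
    steinerDist G S + 1 ≤ W.ncard := by
  obtain ⟨T, hT, rfl, hT_edges⟩ := exists_connected_subgraph_ncard_edgeSet_add_one_eq hW
  rw [← hT_edges, add_le_add_iff_right]
  exact Nat.sInf_le ⟨T, hT, hSW, rfl⟩

lemma exists_connected_induce_ncard_le_steinerDist_add_one (hSW : S ⊆ W)
    (hW : (G.induce W).Connected) :
    ∃ U, S ⊆ U ∧ (G.induce U).Connected ∧ U.ncard ≤ steinerDist G S + 1 := by
  have h_nonempty :
      {k | ∃ T : G.Subgraph, T.Connected ∧ S ⊆ T.verts ∧ T.edgeSet.ncard = k}.Nonempty :=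
    ⟨_, _, connected_induce_iff.1 hW, hSW, rfl⟩
  obtain ⟨T, hT, hST, hT_edges⟩ := Nat.sInf_mem h_nonempty
  refine ⟨T.verts, hST, hT.induce_verts, ?_⟩
  rw [steinerDist, ← hT_edges]
  exact ncard_verts_le_ncard_edgeSet_add_one hT

lemma steinerDist_of_connected_induce [Finite V] (hS : (G.induce S).Connected) :
    steinerDist G S = S.ncard - 1 := by
  have h_le := steinerDist_add_one_le_ncard Set.Subset.rfl hS
  obtain ⟨U, hSU, -, hU⟩ :=
    exists_connected_induce_ncard_le_steinerDist_add_one Set.Subset.rfl hS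
  have h_ge := Set.ncard_le_ncard hSU
  omega

lemma steinerDist_of_not_connected_induce [Finite V] (hS : ¬ (G.induce S).Connected) {v : V}
    (hv : (G.induce (insert v S)).Connected) : steinerDist G S = S.ncard := by
  have h_le := steinerDist_add_one_le_ncard (Set.subset_insert v S) hv
  have h_insert := Set.ncard_insert_le v S
  obtain ⟨U, hSU, hU, hU_card⟩ :=
    exists_connected_induce_ncard_le_steinerDist_add_one (Set.subset_insert v S) hv
  have hSU_ne : S ≠ U := by
    rintro rfl
    exact hS hU
  have h_lt := Set.ncard_lt_ncard (hSU.ssubset_of_ne hSU_ne)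
  omega

theorem steinerWiener_eq_add_card_not_connected_induce [Fintype V]
    [DecidablePred fun S : Finset V => (G.induce (S : Set V)).Connected] {m : ℕ} (hm : m ≠ 0)
    (hG : ∀ S : Finset V, S.card = m → ∃ v, (G.induce (insert v (S : Set V))).Connected) :
    steinerWiener m G = (m - 1) * (Fintype.card V).choose m +
      ((Finset.univ.powersetCard m).filter fun S : Finset V =>
        ¬ (G.induce (S : Set V)).Connected).card := by
  have h_dist : ∀ S ∈ (Finset.univ : Finset V).powersetCard m,
      steinerDist G (S : Set V) =
        (m - 1) + if ¬ (G.induce (S : Set V)).Connected then 1 else 0 := by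
    intro S hS
    have hS_card : S.card = m := (Finset.mem_powersetCard.1 hS).2
    split_ifs with h_conn
    · rw [steinerDist_of_connected_induce h_conn, Set.ncard_coe_finset, hS_card, add_zero]
    · obtain ⟨v, hv⟩ := hG S hS_card
      rw [steinerDist_of_not_connected_induce h_conn hv, Set.ncard_coe_finset]
      omega
  rw [steinerWiener, Finset.sum_congr rfl h_dist, Finset.sum_add_distrib, Finset.sum_const,
    Finset.card_powersetCard, Finset.card_univ, smul_eq_mul, mul_comm, Finset.card_filter]

end SteinerDist

section CompleteMultipartite

variable {V : Type*} {G : SimpleGraph V}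

lemma connected_of_isCompleteMultipartite_of_adj (hG : G.IsCompleteMultipartite) {a b : V}
    (hab : G.Adj a b) : G.Connected := by
  refine G.connected_iff_exists_forall_reachable.2 ⟨a, fun u => ?_⟩
  by_cases hau : G.Adj a u
  · exact hau.reachable
  · have hub : G.Adj u b := by
      by_contra hub
      exact hG.trans _ _ _ hau hub hab
    exact hab.reachable.trans hub.symm.reachable

lemma connected_induce_iff_not_isIndepSet_of_isCompleteMultipartite
    (hG : G.IsCompleteMultipartite) {S : Set V} (hS : S.Nontrivial) :
    (G.induce S).Connected ↔ ¬ G.IsIndepSet S := by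
  constructor
  · intro h_conn h_indep
    have := hS.coe_sort
    obtain ⟨a, ha⟩ := hS.nonempty
    obtain ⟨b, hab⟩ := h_conn.preconnected.exists_adj_of_nontrivial ⟨a, ha⟩
    exact h_indep ha b.2 (G.ne_of_adj hab) hab
  · intro h_not_indep
    obtain ⟨a, ha, b, hb, -, hab⟩ : ∃ a ∈ S, ∃ b ∈ S, a ≠ b ∧ G.Adj a b := by
      simpa [Set.Pairwise] using h_not_indep
    exact connected_of_isCompleteMultipartite_of_adj (a := (⟨a, ha⟩ : S)) (b := ⟨b, hb⟩)
      hG.induce hab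

lemma exists_connected_induce_insert_of_isCompleteMultipartite
    (hG : G.IsCompleteMultipartite) (hG_conn : G.Preconnected) {S : Set V} (hS : S.Nonempty) :
    ∃ v, (G.induce (insert v S)).Connected := by
  obtain ⟨a, ha⟩ := hS
  rcases subsingleton_or_nontrivial V with _ | _
  · exact ⟨a, { preconnected := .of_subsingleton, nonempty := ⟨a, Set.mem_insert a S⟩ }⟩
  · obtain ⟨v, hav⟩ := hG_conn.exists_adj_of_nontrivial a
    exact ⟨v, connected_of_isCompleteMultipartite_of_adj (a := ⟨a, Set.mem_insert_of_mem v ha⟩)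
      (b := ⟨v, Set.mem_insert v S⟩) hG.induce hav⟩

theorem steinerWiener_of_isCompleteMultipartite [Fintype V] [DecidableEq V] [DecidableRel G.Adj]
    (hG : G.IsCompleteMultipartite) (hG_conn : G.Preconnected) {m : ℕ} (hm : 2 ≤ m) :
    steinerWiener m G =
      (m - 1) * (Fintype.card V).choose m + (G.indepSetFinset m).card := by
  have h_nontrivial {S : Finset V} (hS : S.card = m) : (S : Set V).Nontrivial :=
    Finset.one_lt_card_iff_nontrivial.1 (by omega)
  have h_indep : ((Finset.univ.powersetCard m).filter fun S : Finset V =>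
      ¬ (G.induce (S : Set V)).Connected) = G.indepSetFinset m := by
    ext S
    rw [Finset.mem_filter, Finset.mem_powersetCard_univ, mem_indepSetFinset_iff,
      isNIndepSet_iff, and_comm]
    refine and_congr_left fun hS => ?_
    rw [connected_induce_iff_not_isIndepSet_of_isCompleteMultipartite hG (h_nontrivial hS), not_not]
  rw [← h_indep]
  exact steinerWiener_eq_add_card_not_connected_induce (by omega) fun S hS =>
    exists_connected_induce_insert_of_isCompleteMultipartite hG hG_conn (h_nontrivial hS).nonempty

end CompleteMultipartite

section CompleteMultipartiteGraph

variable {ι : Type*} {F : ι → Type*}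

lemma completeMultipartiteGraph_connected [Nontrivial ι] [∀ i, Nonempty (F i)] :
    (completeMultipartiteGraph F).Connected := by
  obtain ⟨i, j, hij⟩ := exists_pair_ne ι
  exact connected_of_isCompleteMultipartite_of_adj
    (completeMultipartiteGraph.isCompleteMultipartite F)
    (a := ⟨i, Classical.arbitrary _⟩) (b := ⟨j, Classical.arbitrary _⟩) hij

lemma isIndepSet_completeMultipartiteGraph_iff {S : Set (Σ i, F i)} (hS : S.Nonempty) :
    (completeMultipartiteGraph F).IsIndepSet S ↔ ∃ i, S ⊆ Set.range (Sigma.mk i) := by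
  simp only [Set.range_sigmaMk]
  constructor
  · intro h_indep
    obtain ⟨a, ha⟩ := hS
    refine ⟨a.1, fun b hb => ?_⟩
    by_contra hba
    exact h_indep hb ha (fun h => hba (congrArg Sigma.fst h)) hba
  · rintro ⟨i, hi⟩ a ha b hb - hab
    exact hab ((hi ha).trans (hi hb).symm)

lemma card_indepSetFinset_completeMultipartiteGraph [Fintype ι] [∀ i, Fintype (F i)]
    [DecidableEq (Σ i, F i)] [DecidableRel (completeMultipartiteGraph F).Adj]
    {m : ℕ} (hm : m ≠ 0) :
    ((completeMultipartiteGraph F).indepSetFinset m).card =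
      ∑ i, (Fintype.card (F i)).choose m := by
  classical
  have h_parts : (completeMultipartiteGraph F).indepSetFinset m =
      Finset.univ.biUnion fun i =>
        (Finset.univ.map (Function.Embedding.sigmaMk i)).powersetCard m := by
    ext S
    simp only [mem_indepSetFinset_iff, isNIndepSet_iff, Finset.mem_biUnion, Finset.mem_univ,
      true_and, Finset.mem_powersetCard, exists_and_right]
    refine and_congr_left fun hS => ?_
    have hS_nonempty : S.Nonempty := Finset.card_ne_zero.1 (hS ▸ hm)
    rw [isIndepSet_completeMultipartiteGraph_iff hS_nonempty]
    simp only [← Finset.coe_subset, Finset.coe_map, Finset.coe_univ, Set.image_univ,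
      Function.Embedding.sigmaMk_apply]
  have h_disjoint : ((Finset.univ : Finset ι) : Set ι).PairwiseDisjoint fun i =>
      ((Finset.univ : Finset (F i)).map (Function.Embedding.sigmaMk i)).powersetCard m := by
    rintro i - j - hij
    refine Finset.disjoint_left.2 fun S hSi hSj => ?_
    obtain ⟨hSi, hS⟩ := Finset.mem_powersetCard.1 hSi
    obtain ⟨a, ha⟩ : S.Nonempty := Finset.card_ne_zero.1 (hS ▸ hm)
    obtain ⟨x, -, rfl⟩ := Finset.mem_map.1 (hSi ha)
    obtain ⟨y, -, hxy⟩ := Finset.mem_map.1 ((Finset.mem_powersetCard.1 hSj).1 ha)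
    exact hij (congrArg Sigma.fst hxy).symm
  rw [h_parts, Finset.card_biUnion h_disjoint]
  simp only [Finset.card_powersetCard, Finset.card_map, Finset.card_univ]

theorem steinerWiener_completeMultipartite_general [Fintype ι] [∀ i, Fintype (F i)]
    (hF : (completeMultipartiteGraph F).Preconnected) {m : ℕ} (hm : 2 ≤ m) :
    steinerWiener m (completeMultipartiteGraph F) =
      (m - 1) * (∑ i, Fintype.card (F i)).choose m + ∑ i, (Fintype.card (F i)).choose m := by
  classical
  rw [steinerWiener_of_isCompleteMultipartite
      (completeMultipartiteGraph.isCompleteMultipartite F) hF hm, Fintype.card_sigma,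
    card_indepSetFinset_completeMultipartiteGraph (by omega)]

end CompleteMultipartiteGraph

/-- Let `p ≥ 2` and let `G = K_{n 1, …, n p}` be the complete
multipartite graph with parts of sizes `n 1, …, n p ≥ 1`, and let `n = Σ_{i=1}^p n i`.
Then for every `m` with `2 ≤ m ≤ n`, the `m`-Steiner Wiener index of `G` equals
`SW_m(G) = (m − 1)·C(n, m) + Σ_{i=1}^p C(n i, m)`. -/
theorem steinerWiener_completeMultipartite {p : ℕ} (hp : 2 ≤ p)
    (n : Fin p → ℕ) (hn : ∀ i, 1 ≤ n i)
    (m : ℕ) (hm : 2 ≤ m) (hmn : m ≤ ∑ i, n i) :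
    steinerWiener m (completeMultipartiteGraph fun i => Fin (n i)) =
      (m - 1) * (∑ i, n i).choose m + ∑ i, (n i).choose m := by
  have : Nontrivial (Fin p) := Fin.nontrivial_iff_two_le.2 hp
  have (i : Fin p) : Nonempty (Fin (n i)) := Fin.pos_iff_nonempty.1 (hn i)
  simpa only [Fintype.card_fin] using
    steinerWiener_completeMultipartite_general
      (F := fun i => Fin (n i)) completeMultipartiteGraph_connected.preconnected hm
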